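/- arXiv:math/0602180 — 13 statements merged into one kernel-verified Lean document; each statement's English description precedes it below -/
import Mathlib

section
/- Let ∂ : C → B be a crossed module. On the semidirect product G = C ⋊ B (with B acting on C by the given action, so (c,b)·(c',b') = (c·ᵇc', b·b')), define maps s, t : G → G by s(c,b) = (1,b) and t(c,b) = (1, ∂(c)·b). Then s and t are group endomorphisms of G satisfying s∘t = t, t∘s = s, and every element of ker s commutes with every element of ker t (i.e. ⁅ker s, ker t⁆ = 1); that is, (G,s,t) is a cat¹-group. -/
/-- Given a crossed module `∂ : C → B`, the semidirect product
`G = C ⋊ B` with `s(c,b) = (1,b)` and `t(c,b) = (1, ∂(c)·b)` is a cat¹-group: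
`s` and `t` are endomorphisms, `s∘t = t`, `t∘s = s`, and `⁅ker s, ker t⁆ = 1`. -/
theorem cat1_of_crossed_module {C B : Type*} [Group C] [Group B]
    [MulDistribMulAction B C] (d : C →* B)
    (hconj : ∀ (b : B) (c : C), d (b • c) = b * d c * b⁻¹)
    (hpeiffer : ∀ c c' : C, d c • c' = c * c' * c⁻¹)
    (s t : C ⋊[MulDistribMulAction.toMulAut B C] B →
      C ⋊[MulDistribMulAction.toMulAut B C] B)
    (hs : ∀ g, s g = ⟨1, g.right⟩)
    (ht : ∀ g, t g = ⟨1, d g.left * g.right⟩) :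
    (∀ g h, s (g * h) = s g * s h) ∧
    (∀ g h, t (g * h) = t g * t h) ∧
    (∀ g, s (t g) = t g) ∧
    (∀ g, t (s g) = s g) ∧
    (∀ g h, s g = 1 → t h = 1 → g * h = h * g) := by
  refine ⟨fun g h => ?_, fun g h => ?_, fun g => ?_, fun g => ?_, fun g h hg hh => ?_⟩
  · ext <;> simp [hs]
  · ext <;> simp [ht, hconj, mul_assoc]
  · simp [hs, ht]
  · simp [hs, ht]
  · have hgr : g.right = 1 := by simpa [hs] using congrArg SemidirectProduct.right hg
    have hhr : h.right = d h.left⁻¹ := by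
      have := congrArg SemidirectProduct.right hh
      rw [ht] at this
      rw [map_inv]
      exact eq_inv_of_mul_eq_one_right this
    ext
    · rw [SemidirectProduct.mul_left, SemidirectProduct.mul_left, hgr, hhr,
        MulDistribMulAction.toMulAut_apply, MulDistribMulAction.toMulAut_apply,
        MulDistribMulAction.toMulEquiv_apply, MulDistribMulAction.toMulEquiv_apply,
        hpeiffer, one_smul]
      group
    · simp [hgr]
end

section
/- Let (G,s,t) be a cat¹-group. Then: (a) t maps ker s into the range of s; (b) for every c ∈ ker s and every b in the range of s, b·c·b⁻¹ ∈ ker s; and (c) the conjugation action of the subgroup range s on ker s together with the homomorphism ∂ : ker s → range s obtained by restricting t is a crossed module, i.e. ∂(b·c·b⁻¹) = b·∂(c)·b⁻¹ for all b ∈ range s, c ∈ ker s, and ∂(c)·c'·∂(c)⁻¹ = c·c'·c⁻¹ for all c, c' ∈ ker s. -/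
/-- Given a cat¹-group `(G,s,t)`: `t` maps `ker s` into `range s`,
`ker s` is stable under conjugation by elements of `range s`, and the conjugation
action of `range s` on `ker s` together with `∂ = t|_{ker s}` is a crossed module. -/
theorem crossed_module_of_cat1 {G : Type*} [Group G] (s t : G →* G)
    (hst : ∀ g, s (t g) = t g) (hts : ∀ g, t (s g) = s g)
    (hcomm : ∀ g h, s g = 1 → t h = 1 → g * h = h * g) :
    (∀ c, s c = 1 → t c ∈ s.range) ∧
    (∀ c, s c = 1 → ∀ b ∈ s.range, s (b * c * b⁻¹) = 1) ∧
    (∀ b ∈ s.range, ∀ c, s c = 1 → t (b * c * b⁻¹) = b * t c * b⁻¹) ∧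
    (∀ c c', s c = 1 → s c' = 1 → t c * c' * (t c)⁻¹ = c * c' * c⁻¹) := by
  refine ⟨fun c _ => ⟨t c, hst c⟩, fun c hc b _ => by simp [hc], ?_, ?_⟩
  · rintro _ ⟨g, rfl⟩ c _
    simp [hts]
  · intro c c' _ hc'
    have htt : t (t c) = t c := by rw [← hst c, hts]
    have h := hcomm c' (c⁻¹ * t c) hc' (by simp [htt])
    rw [mul_inv_eq_iff_eq_mul]
    calc t c * c' = c * (c⁻¹ * t c * c') := by group
      _ = c * (c' * (c⁻¹ * t c)) := by rw [h]
      _ = c * c' * c⁻¹ * t c := by group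
end

section
/- Let (L,M,N,P,λ,λ',μ,ν,h) be a crossed square. Form the semidirect product L ⋊ N, where N acts on L via ν (ⁿl := ^{ν(n)}l), and the semidirect product M ⋊ P. Then the formula ^{(m,p)}(l,n) := (ᵐ(ᵖl)·h(m, ᵖn), ᵖn) defines an action of M ⋊ P on L ⋊ N by group automorphisms; that is, each such map is an automorphism of L ⋊ N and the assignment (m,p) ↦ (this automorphism) is a group homomorphism from M ⋊ P to Aut(L ⋊ N). -/
/-- A crossed square of groups `(L,M,N,P,λ,λ',μ,ν,h)`: the four maps form a
commutative square over `P`, all of `μ`, `ν`, `μ∘λ`, `λ` (with `M` acting on `L`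
via `μ`) and `λ'` (with `N` acting on `L` via `ν`) are crossed modules, `λ`, `λ'`
are `P`-equivariant, and `h : M × N → L` satisfies the usual axioms. -/
structure CrossedSquare (L M N P : Type*) [Group L] [Group M] [Group N] [Group P]
    [MulDistribMulAction P L] [MulDistribMulAction P M] [MulDistribMulAction P N] where
  lam : L →* M
  lam' : L →* N
  mu : M →* P
  nu : N →* P
  comm : ∀ l : L, mu (lam l) = nu (lam' l)
  mu_conj : ∀ (p : P) (m : M), mu (p • m) = p * mu m * p⁻¹
  mu_peiffer : ∀ m m' : M, mu m • m' = m * m' * m⁻¹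
  nu_conj : ∀ (p : P) (n : N), nu (p • n) = p * nu n * p⁻¹
  nu_peiffer : ∀ n n' : N, nu n • n' = n * n' * n⁻¹
  mulam_conj : ∀ (p : P) (l : L), mu (lam (p • l)) = p * mu (lam l) * p⁻¹
  mulam_peiffer : ∀ l l' : L, mu (lam l) • l' = l * l' * l⁻¹
  lam_conj : ∀ (m : M) (l : L), lam (mu m • l) = m * lam l * m⁻¹
  lam'_conj : ∀ (n : N) (l : L), lam' (nu n • l) = n * lam' l * n⁻¹
  lam'_peiffer : ∀ l l' : L, nu (lam' l) • l' = l * l' * l⁻¹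
  lam_equivariant : ∀ (p : P) (l : L), lam (p • l) = p • lam l
  lam'_equivariant : ∀ (p : P) (l : L), lam' (p • l) = p • lam' l
  h : M → N → L
  h_mul_left : ∀ (m m' : M) (n : N), h (m * m') n = h (mu m • m') (mu m • n) * h m n
  h_mul_right : ∀ (m : M) (n n' : N), h m (n * n') = h m n * h (nu n • m) (nu n • n')
  lam_h : ∀ (m : M) (n : N), lam (h m n) = m * (nu n • m)⁻¹
  lam'_h : ∀ (m : M) (n : N), lam' (h m n) = (mu m • n) * n⁻¹
  h_lam : ∀ (l : L) (n : N), h (lam l) n = l * (nu n • l)⁻¹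
  h_lam' : ∀ (m : M) (l : L), h m (lam' l) = (mu m • l) * l⁻¹
  h_equivariant : ∀ (p : P) (m : M) (n : N), h (p • m) (p • n) = p • h m n

namespace CrossedSquare

variable {L M N P : Type*} [Group L] [Group M] [Group N] [Group P]
  [MulDistribMulAction P L] [MulDistribMulAction P M] [MulDistribMulAction P N]
  (C : CrossedSquare L M N P)

theorem h_one_left (n : N) : C.h 1 n = 1 := by
  simpa using C.h_lam 1 n

theorem smul_smul_mul_h (m : M) (n : N) (l : L) :
    C.mu m • C.nu n • l * C.h m n = C.h m n * C.nu n • C.mu m • l := by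
  have key := C.mulam_peiffer (C.h m n) (C.nu n • C.mu m • l)
  rw [C.lam_h, map_mul, map_inv, C.mu_conj, eq_mul_inv_iff_mul_eq] at key
  rw [← key]
  simp [smul_smul, mul_assoc]

theorem h_mul_right_eq_mul_smul (m : M) (n n' : N) :
    C.h m (n * n') = C.h m n * C.nu n • C.h m n' := by
  rw [C.h_mul_right, C.h_equivariant]

theorem smul_nu_smul (p : P) (n : N) (l : L) :
    p • C.nu n • l = C.nu (p • n) • p • l := by
  simp [C.nu_conj, smul_smul]

end CrossedSquare

/-- For a crossed square, the formula
`^{(m,p)}(l,n) = (ᵐ(ᵖl)·h(m, ᵖn), ᵖn)` defines an action of `M ⋊ P` on `L ⋊ N`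
by group automorphisms. -/
theorem crossed_square_action {L M N P : Type*} [Group L] [Group M] [Group N] [Group P]
    [MulDistribMulAction P L] [MulDistribMulAction P M] [MulDistribMulAction P N]
    (C : CrossedSquare L M N P)
    (σ : (M ⋊[MulDistribMulAction.toMulAut P M] P) →
      (L ⋊[(MulDistribMulAction.toMulAut P L).comp C.nu] N) →
      (L ⋊[(MulDistribMulAction.toMulAut P L).comp C.nu] N))
    (hσ : ∀ g x, σ g x =
      ⟨(C.mu g.left • (g.right • x.left)) * C.h g.left (g.right • x.right),
        g.right • x.right⟩) :
    (∀ g, Function.Bijective (σ g)) ∧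
    (∀ g x y, σ g (x * y) = σ g x * σ g y) ∧
    (∀ g g' x, σ (g * g') x = σ g (σ g' x)) ∧
    (∀ x, σ 1 x = x) := by
  have map_one' : ∀ x, σ 1 x = x := fun x => by
    rw [hσ]
    ext <;> simp [C.h_one_left]
  have map_mul' : ∀ g g' x, σ (g * g') x = σ g (σ g' x) := fun g g' x => by
    simp only [hσ]
    ext
    · simp only [SemidirectProduct.mul_left, SemidirectProduct.mul_right,
        MulDistribMulAction.toMulAut_apply, MulDistribMulAction.toMulEquiv_apply, C.h_mul_left,
        C.h_equivariant, map_mul, C.mu_conj, smul_mul', mul_smul, inv_smul_smul, mul_assoc]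
    · simp [mul_smul]
  refine ⟨fun g => ?_, fun g x y => ?_, map_mul', map_one'⟩
  · refine Function.bijective_iff_has_inverse.mpr ⟨σ g⁻¹, fun x => ?_, fun x => ?_⟩
    · rw [← map_mul', inv_mul_cancel, map_one']
    · rw [← map_mul', mul_inv_cancel, map_one']
  · simp only [hσ]
    ext
    · simp only [SemidirectProduct.mul_left, SemidirectProduct.mul_right, MonoidHom.comp_apply,
        MulDistribMulAction.toMulAut_apply, MulDistribMulAction.toMulEquiv_apply, smul_mul',
        C.h_mul_right_eq_mul_smul, C.smul_nu_smul g.right, mul_assoc]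
      rw [← mul_assoc (C.mu g.left • C.nu _ • _), C.smul_smul_mul_h, mul_assoc]
    · simp
end

section
/- Let (L,M,N,∂₂,∂₁,{–,–}) be a 2-crossed module. Define m·l := {∂₂(l), m}·l for m ∈ M, l ∈ L. Then this formula defines an action of M on L by group automorphisms (1·l = l, (m·m')·l = m·(m'·l), and m·(l·l') = (m·l)·(m·l')), and with this action (L, M, ∂₂) is a crossed module: ∂₂(m·l) = m·∂₂(l)·m⁻¹ for all m ∈ M, l ∈ L, and ∂₂(l)·l' = l·l'·l⁻¹ for all l, l' ∈ L. -/
/-- A 2-crossed module of groups `L → M → N` with Peiffer lifting `{-,-} : M × M → L`. -/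
structure TwoCrossedModule (L M N : Type*) [Group L] [Group M] [Group N]
    [MulDistribMulAction N M] [MulDistribMulAction N L] where
  d2 : L →* M
  d1 : M →* N
  d1_d2 : ∀ l : L, d1 (d2 l) = 1
  d1_conj : ∀ (n : N) (m : M), d1 (n • m) = n * d1 m * n⁻¹
  d2_equivariant : ∀ (n : N) (l : L), d2 (n • l) = n • d2 l
  pl : M → M → L
  pl_equivariant : ∀ (n : N) (m m' : M), n • pl m m' = pl (n • m) (n • m')
  cm1 : ∀ m m' : M, d2 (pl m m') = (d1 m • m') * m * m'⁻¹ * m⁻¹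
  cm2 : ∀ l l' : L, pl (d2 l) (d2 l') = l' * l * l'⁻¹ * l⁻¹
  cm3i : ∀ m m' m'' : M, pl (m * m') m'' = (d1 m • pl m' m'') * pl m (m' * m'' * m'⁻¹)
  cm3ii : ∀ m m' m'' : M,
    pl m (m' * m'') = pl m m' * pl (d2 (pl m m'')) (m * m' * m⁻¹) * pl m m''
  cm4 : ∀ (m : M) (l : L), pl m (d2 l) * pl (d2 l) m = (d1 m • l) * l⁻¹

namespace TwoCrossedModule

variable {L M N : Type*} [Group L] [Group M] [Group N]
  [MulDistribMulAction N M] [MulDistribMulAction N L] (T : TwoCrossedModule L M N)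

theorem pl_one_left (m : M) : T.pl 1 m = 1 := by
  simpa using T.cm3i 1 1 m

theorem pl_d2_one_right (l : L) : T.pl (T.d2 l) 1 = 1 := by
  simpa [pl_one_left] using T.cm4 1 l

theorem d2_pl_d2 (l : L) (m : M) :
    T.d2 (T.pl (T.d2 l) m) = m * T.d2 l * m⁻¹ * (T.d2 l)⁻¹ := by
  rw [T.cm1, T.d1_d2, one_smul]

/-- The assignment `m·l := {∂₂(l),m}·l` satisfies `(∂₂(x)·m)·l = x·(m·l)·x⁻¹`. -/
theorem pl_d2_d2_mul (l x : L) (m : M) :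
    T.pl (T.d2 l) (T.d2 x * m) * l = x * (T.pl (T.d2 l) m * l) * x⁻¹ := by
  have h : T.d2 l * T.d2 x * (T.d2 l)⁻¹ = T.d2 (l * x * l⁻¹) := by simp
  rw [T.cm3ii, h, T.cm2, T.cm2]
  group

/-- Conjugating `m` by `∂₂(x)` amounts to left multiplication by `∂₂({∂₂(x),m}⁻¹)`. -/
theorem d2_conj_eq (x : L) (m : M) :
    T.d2 x * m * (T.d2 x)⁻¹ = T.d2 (T.pl (T.d2 x) m)⁻¹ * m := by
  rw [map_inv, d2_pl_d2]
  group

theorem pl_d2_mul_left (l l' : L) (m : M) :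
    T.pl (T.d2 (l * l')) m * (l * l') =
      T.pl (T.d2 l) m * l * (T.pl (T.d2 l') m * l') := by
  have h := T.pl_d2_d2_mul l (T.pl (T.d2 l') m)⁻¹ m
  rw [← d2_conj_eq] at h
  rw [map_mul, T.cm3i, T.d1_d2, one_smul, mul_assoc, ← mul_assoc _ l l', h]
  group

theorem pl_d2_mul_right (l : L) (m m' : M) :
    T.pl (T.d2 l) (m * m') * l =
      T.pl (T.d2 (T.pl (T.d2 l) m' * l)) m * (T.pl (T.d2 l) m' * l) := by
  have h := T.pl_d2_d2_mul (T.pl (T.d2 l) m') (T.pl (T.d2 l) m)⁻¹ m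
  rw [← d2_conj_eq] at h
  rw [pl_d2_mul_left, T.cm3ii, mul_assoc (T.pl (T.d2 l) m), h]
  group

end TwoCrossedModule

/-- In a 2-crossed module `(L,M,N,∂₂,∂₁,{-,-})`, the formula
`m·l := {∂₂(l),m}·l` defines an action of `M` on `L` by group automorphisms, and
with this action `(L,M,∂₂)` is a crossed module. -/
theorem crossed_module_of_two_crossed_module {L M N : Type*}
    [Group L] [Group M] [Group N] [MulDistribMulAction N M] [MulDistribMulAction N L]
    (T : TwoCrossedModule L M N)
    (act : M → L → L) (hact : ∀ m l, act m l = T.pl (T.d2 l) m * l) :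
    (∀ l, act 1 l = l) ∧
    (∀ m m' l, act (m * m') l = act m (act m' l)) ∧
    (∀ m l l', act m (l * l') = act m l * act m l') ∧
    (∀ m l, T.d2 (act m l) = m * T.d2 l * m⁻¹) ∧
    (∀ l l', act (T.d2 l) l' = l * l' * l⁻¹) := by
  simp only [hact]
  refine ⟨fun l => ?_, fun m m' l => T.pl_d2_mul_right l m m',
    fun m l l' => T.pl_d2_mul_left l l' m, fun m l => ?_, fun l l' => ?_⟩
  · rw [T.pl_d2_one_right, one_mul]
  · rw [map_mul, T.d2_pl_d2, inv_mul_cancel_right]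
  · rw [T.cm2, inv_mul_cancel_right]
end

section
/- Let (L,M,N,P,λ,λ',μ,ν,h) be a crossed square. Form M ⋊ N where N acts on M via ν (ⁿm := ^{ν(n)}m). Define ∂₂ : L → M ⋊ N by ∂₂(l) = (λ(l)⁻¹, λ'(l)) and ∂₁ : M ⋊ N → P by ∂₁(m,n) = μ(m)·ν(n). Then ∂₂ and ∂₁ are group homomorphisms and ∂₁∘∂₂ is the trivial homomorphism. -/
/-- For a crossed square `(L,M,N,P,λ,λ',μ,ν,h)`, the maps
`∂₂ : L → M ⋊ N`, `∂₂(l) = (λ(l)⁻¹, λ'(l))` and `∂₁ : M ⋊ N → P`,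
`∂₁(m,n) = μ(m)·ν(n)` are group homomorphisms with `∂₁∘∂₂` trivial
(`N` acting on `M` via `ν`). -/
theorem mapping_cone_complex {L M N P : Type*} [Group L] [Group M] [Group N] [Group P]
    [MulDistribMulAction P L] [MulDistribMulAction P M] [MulDistribMulAction P N]
    (C : CrossedSquare L M N P) :
    (∀ l l' : L,
      (⟨(C.lam (l * l'))⁻¹, C.lam' (l * l')⟩ :
          M ⋊[(MulDistribMulAction.toMulAut P M).comp C.nu] N) =
        (⟨(C.lam l)⁻¹, C.lam' l⟩ :
          M ⋊[(MulDistribMulAction.toMulAut P M).comp C.nu] N) *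
        ⟨(C.lam l')⁻¹, C.lam' l'⟩) ∧
    (∀ x y : M ⋊[(MulDistribMulAction.toMulAut P M).comp C.nu] N,
      C.mu ((x * y).left) * C.nu ((x * y).right) =
        (C.mu x.left * C.nu x.right) * (C.mu y.left * C.nu y.right)) ∧
    (∀ l : L, C.mu (C.lam l)⁻¹ * C.nu (C.lam' l) = 1) := by
  refine ⟨fun l l' => ?_, fun x y => ?_, fun l => ?_⟩
  · ext
    · have key : C.nu (C.lam' l) • (C.lam l')⁻¹ = C.lam l * (C.lam l')⁻¹ * (C.lam l)⁻¹ := by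
        rw [← C.comm, C.mu_peiffer]
      change (C.lam (l * l'))⁻¹ = (C.lam l)⁻¹ * C.nu (C.lam' l) • (C.lam l')⁻¹
      rw [key, map_mul]
      group
    · exact map_mul C.lam' l l'
  · change C.mu (x.left * C.nu x.right • y.left) * C.nu (x.right * y.right) = _
    rw [map_mul, map_mul, C.mu_conj]
    group
  · rw [map_inv, C.comm, inv_mul_cancel]
end

section
/- Let μ : M → P and ν : N → P be crossed modules over the same group P. Form M ⋊ N where N acts on M via ν (ⁿm := ^{ν(n)}m), let P act on M ⋊ N componentwise (ᵖ(m,n) = (ᵖm, ᵖn)), and let ∂₁ : M ⋊ N → P be ∂₁(m,n) = μ(m)·ν(n). Then for all x = (m,n) and y = (c,a) in M ⋊ N, the Peiffer commutator ⟨x,y⟩ = (^{∂₁(x)}y)·x·y⁻¹·x⁻¹ equals ((^{ν(n·a·n⁻¹)}m)·m⁻¹, ^{μ(m)}(n·a·n⁻¹)·(n·a⁻¹·n⁻¹)); in particular ⟨x,y⟩ does not depend on the first coordinate c of y. -/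
/-- For crossed modules `μ : M → P`, `ν : N → P`, with
`∂₁(m,n) = μ(m)·ν(n)` on `M ⋊ N` (`N` acting on `M` via `ν`) and `P` acting
componentwise, the Peiffer commutator of `x = (m,n)` and `y = (c,a)` equals
`((^{ν(n·a·n⁻¹)}m)·m⁻¹, ^{μ(m)}(n·a·n⁻¹)·(n·a⁻¹·n⁻¹))`; in particular it does not
depend on `c`. -/
theorem peiffer_commutator_semidirect {M N P : Type*} [Group M] [Group N] [Group P]
    [MulDistribMulAction P M] [MulDistribMulAction P N]
    (μ : M →* P) (ν : N →* P)
    (hμconj : ∀ (p : P) (m : M), μ (p • m) = p * μ m * p⁻¹)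
    (hμpeiffer : ∀ m m' : M, μ m • m' = m * m' * m⁻¹)
    (hνconj : ∀ (p : P) (n : N), ν (p • n) = p * ν n * p⁻¹)
    (hνpeiffer : ∀ n n' : N, ν n • n' = n * n' * n⁻¹)
    (m c : M) (n a : N) :
    ((⟨(μ m * ν n) • c, (μ m * ν n) • a⟩ :
        M ⋊[(MulDistribMulAction.toMulAut P M).comp ν] N) *
      ⟨m, n⟩ * (⟨c, a⟩ : M ⋊[(MulDistribMulAction.toMulAut P M).comp ν] N)⁻¹ *
      (⟨m, n⟩ : M ⋊[(MulDistribMulAction.toMulAut P M).comp ν] N)⁻¹ =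
      ⟨(ν (n * a * n⁻¹) • m) * m⁻¹, (μ m • (n * a * n⁻¹)) * (n * a⁻¹ * n⁻¹)⟩) ∧
    (∀ c' : M,
      (⟨(μ m * ν n) • c, (μ m * ν n) • a⟩ :
          M ⋊[(MulDistribMulAction.toMulAut P M).comp ν] N) *
        ⟨m, n⟩ * (⟨c, a⟩ : M ⋊[(MulDistribMulAction.toMulAut P M).comp ν] N)⁻¹ *
        (⟨m, n⟩ : M ⋊[(MulDistribMulAction.toMulAut P M).comp ν] N)⁻¹ =
      (⟨(μ m * ν n) • c', (μ m * ν n) • a⟩ :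
          M ⋊[(MulDistribMulAction.toMulAut P M).comp ν] N) *
        ⟨m, n⟩ * (⟨c', a⟩ : M ⋊[(MulDistribMulAction.toMulAut P M).comp ν] N)⁻¹ *
        (⟨m, n⟩ : M ⋊[(MulDistribMulAction.toMulAut P M).comp ν] N)⁻¹) := by
  have hμinv (m' x : M) : (μ m')⁻¹ • x = m'⁻¹ * x * m' := by
    rw [← map_inv, hμpeiffer, inv_inv]
  have key (c : M) : ((⟨(μ m * ν n) • c, (μ m * ν n) • a⟩ :
        M ⋊[(MulDistribMulAction.toMulAut P M).comp ν] N) *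
      ⟨m, n⟩ * (⟨c, a⟩ : M ⋊[(MulDistribMulAction.toMulAut P M).comp ν] N)⁻¹ *
      (⟨m, n⟩ : M ⋊[(MulDistribMulAction.toMulAut P M).comp ν] N)⁻¹ =
      ⟨(ν (n * a * n⁻¹) • m) * m⁻¹, (μ m • (n * a * n⁻¹)) * (n * a⁻¹ * n⁻¹)⟩) := by
    rw [mul_inv_eq_iff_eq_mul, mul_inv_eq_iff_eq_mul]
    ext
    · simp [mul_smul, hμpeiffer, hνpeiffer, hμinv, hνconj, mul_assoc]
    · simp [mul_smul, hνpeiffer, mul_assoc]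
  exact ⟨key c, fun c' => (key c).trans (key c').symm⟩
end

section
/- Let (L,M,N,P,λ,λ',μ,ν,h) be a crossed square, and form its mapping cone L → M ⋊ N → P with ∂₂(l) = (λ(l)⁻¹, λ'(l)), ∂₁(m,n) = μ(m)·ν(n), where N acts on M via ν. Define the Peiffer lifting {(m,n),(c,a)} := h(m, n·a·n⁻¹). Then axiom 2CM1 holds: for all x, y ∈ M ⋊ N, ∂₂({x,y}) = (^{∂₁(x)}y)·x·y⁻¹·x⁻¹ in M ⋊ N, where P acts on M ⋊ N componentwise. -/
/-- The Peiffer lifting `{(m,n),(c,a)} = h(m, n·a·n⁻¹)` on the mapping cone of a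
crossed square. -/
def CrossedSquare.plift {L M N P : Type*} [Group L] [Group M] [Group N] [Group P]
    [MulDistribMulAction P L] [MulDistribMulAction P M] [MulDistribMulAction P N]
    (C : CrossedSquare L M N P)
    (x y : M ⋊[(MulDistribMulAction.toMulAut P M).comp C.nu] N) : L :=
  C.h x.left (x.right * y.right * x.right⁻¹)

/-- The boundary `∂₂(l) = (λ(l)⁻¹, λ'(l))` of the mapping cone of a crossed square. -/
def CrossedSquare.cone2 {L M N P : Type*} [Group L] [Group M] [Group N] [Group P]
    [MulDistribMulAction P L] [MulDistribMulAction P M] [MulDistribMulAction P N]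
    (C : CrossedSquare L M N P) (l : L) :
    M ⋊[(MulDistribMulAction.toMulAut P M).comp C.nu] N :=
  ⟨(C.lam l)⁻¹, C.lam' l⟩

/-- Axiom 2CM1 for the mapping cone of a crossed square:
`∂₂({x,y}) = (^{∂₁(x)}y)·x·y⁻¹·x⁻¹`, where `{(m,n),(c,a)} = h(m,n·a·n⁻¹)`,
`∂₂(l) = (λ(l)⁻¹,λ'(l))`, `∂₁(m,n) = μ(m)·ν(n)` and `P` acts componentwise. -/
theorem mapping_cone_2CM1 {L M N P : Type*} [Group L] [Group M] [Group N] [Group P]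
    [MulDistribMulAction P L] [MulDistribMulAction P M] [MulDistribMulAction P N]
    (C : CrossedSquare L M N P)
    (x y : M ⋊[(MulDistribMulAction.toMulAut P M).comp C.nu] N) :
    C.cone2 (C.plift x y) =
      (⟨(C.mu x.left * C.nu x.right) • y.left, (C.mu x.left * C.nu x.right) • y.right⟩ :
        M ⋊[(MulDistribMulAction.toMulAut P M).comp C.nu] N) * x * y⁻¹ * x⁻¹ := by
  obtain ⟨m, n⟩ := x
  obtain ⟨c, a⟩ := y
  have hact : (C.mu m * C.nu n) • a = C.mu m • (n * a * n⁻¹) := by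
    rw [mul_smul, C.nu_peiffer]
  apply SemidirectProduct.ext
  · obtain ⟨b, rfl⟩ : ∃ b, a = n⁻¹ * b * n := ⟨n * a * n⁻¹, by group⟩
    have hb : n * (n⁻¹ * b * n) * n⁻¹ = b := by group
    have nu_mu_smul : C.nu (C.mu m • b) = C.mu (m * (C.nu b • m)⁻¹) * C.nu b := by
      rw [C.nu_conj, map_mul, map_inv, C.mu_conj]
      group
    simp only [CrossedSquare.cone2, CrossedSquare.plift, SemidirectProduct.mul_left,
      SemidirectProduct.mul_right, SemidirectProduct.inv_left, SemidirectProduct.inv_right,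
      MonoidHom.comp_apply, MulDistribMulAction.toMulAut_apply,
      MulDistribMulAction.toMulEquiv_apply, hact, hb, C.lam_h, map_mul C.nu, map_inv C.nu,
      nu_mu_smul, mul_smul, mul_inv_rev, inv_inv, smul_inv_smul, smul_inv',
      C.mu_peiffer]
    group
  · simp only [CrossedSquare.cone2, CrossedSquare.plift, SemidirectProduct.mul_right,
      SemidirectProduct.inv_right, C.lam'_h, hact]
    group
end

section
/- Let (L,M,N,P,λ,λ',μ,ν,h) be a crossed square, with mapping cone ∂₂ : L → M ⋊ N, ∂₂(l) = (λ(l)⁻¹, λ'(l)) (N acting on M via ν) and Peiffer lifting {(m,n),(c,a)} := h(m, n·a·n⁻¹). Then axiom 2CM2 holds: for all l₀, l₁ ∈ L, {∂₂(l₀), ∂₂(l₁)} = l₁·l₀·l₁⁻¹·l₀⁻¹; equivalently, h(λ(l₀)⁻¹, λ'(l₀·l₁·l₀⁻¹)) = [l₁, l₀]. -/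
/-- Axiom 2CM2 for the mapping cone of a crossed square:
`{∂₂(l₀), ∂₂(l₁)} = l₁·l₀·l₁⁻¹·l₀⁻¹`, i.e.
`h(λ(l₀)⁻¹, λ'(l₀·l₁·l₀⁻¹)) = [l₁,l₀]`. -/
theorem mapping_cone_2CM2 {L M N P : Type*} [Group L] [Group M] [Group N] [Group P]
    [MulDistribMulAction P L] [MulDistribMulAction P M] [MulDistribMulAction P N]
    (C : CrossedSquare L M N P) (l₀ l₁ : L) :
    C.plift (C.cone2 l₀) (C.cone2 l₁) = l₁ * l₀ * l₁⁻¹ * l₀⁻¹ ∧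
    C.h (C.lam l₀)⁻¹ (C.lam' (l₀ * l₁ * l₀⁻¹)) = l₁ * l₀ * l₁⁻¹ * l₀⁻¹ := by
  have commutator_eq :
      C.h (C.lam l₀)⁻¹ (C.lam' (l₀ * l₁ * l₀⁻¹)) = l₁ * l₀ * l₁⁻¹ * l₀⁻¹ := by
    rw [← map_inv, C.h_lam', C.mulam_peiffer]
    group
  refine ⟨?_, commutator_eq⟩
  simpa only [CrossedSquare.plift, CrossedSquare.cone2, map_mul, map_inv] using commutator_eq
end

section
/- Let (L,M,N,P,λ,λ',μ,ν,h) be a crossed square, with ∂₁ : M ⋊ N → P, ∂₁(m,n) = μ(m)·ν(n) (N acting on M via ν) and Peiffer lifting {(m,n),(c,a)} := h(m, n·a·n⁻¹). Then axiom 2CM3(i) holds: for all x, x', x'' ∈ M ⋊ N, {x·x', x''} = (^{∂₁(x)}{x', x''})·{x, x'·x''·x'⁻¹} in L, where P acts on L by the given action. -/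
/-- Axiom 2CM3(i) for the mapping cone of a crossed square:
`{x·x', x''} = (^{∂₁(x)}{x',x''})·{x, x'·x''·x'⁻¹}`. -/
theorem mapping_cone_2CM3i {L M N P : Type*} [Group L] [Group M] [Group N] [Group P]
    [MulDistribMulAction P L] [MulDistribMulAction P M] [MulDistribMulAction P N]
    (C : CrossedSquare L M N P)
    (x x' x'' : M ⋊[(MulDistribMulAction.toMulAut P M).comp C.nu] N) :
    C.plift (x * x') x'' =
      ((C.mu x.left * C.nu x.right) • C.plift x' x'') *
        C.plift x (x' * x'' * x'⁻¹) := by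
  have right_conj : x.right * x'.right * x''.right * (x.right * x'.right)⁻¹ =
      C.nu x.right • (x'.right * x''.right * x'.right⁻¹) := by
    rw [C.nu_peiffer]
    group
  have left_mul : (x * x').left = x.left * C.nu x.right • x'.left := rfl
  simp only [CrossedSquare.plift, SemidirectProduct.mul_right, SemidirectProduct.inv_right]
  rw [right_conj, left_mul, C.h_mul_left, ← mul_smul, ← mul_smul, C.h_equivariant,
    C.nu_peiffer]
end

section
/- Let (L,M,N,P,λ,λ',μ,ν,h) be a crossed square, with ∂₂ : L → M ⋊ N, ∂₂(l) = (λ(l)⁻¹, λ'(l)) (N acting on M via ν) and Peiffer lifting {(m,n),(c,a)} := h(m, n·a·n⁻¹). Then axiom 2CM3(ii) holds: for all x, x', x'' ∈ M ⋊ N, {x, x'·x''} = {x, x'}·{∂₂({x, x''}), x·x'·x⁻¹}·{x, x''} in L. -/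
/-- Lifting against a boundary: `{∂₂ l, (c,a)} = ᵃl·l⁻¹`. -/
theorem CrossedSquare.plift_cone2 {L M N P : Type*} [Group L] [Group M] [Group N] [Group P]
    [MulDistribMulAction P L] [MulDistribMulAction P M] [MulDistribMulAction P N]
    (C : CrossedSquare L M N P) (l : L)
    (y : M ⋊[(MulDistribMulAction.toMulAut P M).comp C.nu] N) :
    C.plift (C.cone2 l) y = (C.nu y.right • l) * l⁻¹ := by
  have hconj : C.nu (C.lam' l * y.right * (C.lam' l)⁻¹) • l = l * (C.nu y.right • l) * l⁻¹ := by
    rw [← map_inv C.lam', map_mul, map_mul, mul_smul, mul_smul, C.lam'_peiffer l⁻¹,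
      C.lam'_peiffer l]
    simp
  simp only [CrossedSquare.plift, CrossedSquare.cone2]
  rw [← map_inv C.lam, C.h_lam, smul_inv', inv_inv, hconj]
  group

/-- Axiom 2CM3(ii) for the mapping cone of a crossed square:
`{x, x'·x''} = {x,x'}·{∂₂({x,x''}), x·x'·x⁻¹}·{x,x''}`. -/
theorem mapping_cone_2CM3ii {L M N P : Type*} [Group L] [Group M] [Group N] [Group P]
    [MulDistribMulAction P L] [MulDistribMulAction P M] [MulDistribMulAction P N]
    (C : CrossedSquare L M N P)
    (x x' x'' : M ⋊[(MulDistribMulAction.toMulAut P M).comp C.nu] N) :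
    C.plift x (x' * x'') =
      C.plift x x' * C.plift (C.cone2 (C.plift x x'')) (x * x' * x⁻¹) *
        C.plift x x'' := by
  rw [C.plift_cone2]
  have hright : (x * x' * x⁻¹).right = x.right * x'.right * x.right⁻¹ := by simp
  have hmul : x.right * (x' * x'').right * x.right⁻¹ =
      x.right * x'.right * x.right⁻¹ * (x.right * x''.right * x.right⁻¹) := by
    simp [mul_assoc]
  rw [hright]
  simp only [CrossedSquare.plift]
  rw [hmul, C.h_mul_right, C.h_equivariant]
  group
end

section
/- Let (L,M,N,P,λ,λ',μ,ν,h) be a crossed square, with ∂₂ : L → M ⋊ N, ∂₂(l) = (λ(l)⁻¹, λ'(l)), ∂₁ : M ⋊ N → P, ∂₁(m,n) = μ(m)·ν(n) (N acting on M via ν) and Peiffer lifting {(m,n),(c,a)} := h(m, n·a·n⁻¹). Then axiom 2CM4 holds: for all x = (m,n) ∈ M ⋊ N and l ∈ L, {x, ∂₂(l)}·{∂₂(l), x} = (^{μ(m)·ν(n)}l)·l⁻¹ in L, where P acts on L by the given action. -/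
/-- Axiom 2CM4 for the mapping cone of a crossed square:
for `x = (m,n)` and `l ∈ L`, `{x, ∂₂(l)}·{∂₂(l), x} = (^{μ(m)·ν(n)}l)·l⁻¹`. -/
theorem mapping_cone_2CM4 {L M N P : Type*} [Group L] [Group M] [Group N] [Group P]
    [MulDistribMulAction P L] [MulDistribMulAction P M] [MulDistribMulAction P N]
    (C : CrossedSquare L M N P) (m : M) (n : N) (l : L) :
    C.plift (⟨m, n⟩ : M ⋊[(MulDistribMulAction.toMulAut P M).comp C.nu] N) (C.cone2 l) *
      C.plift (C.cone2 l) (⟨m, n⟩ : M ⋊[(MulDistribMulAction.toMulAut P M).comp C.nu] N) =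
      ((C.mu m * C.nu n) • l) * l⁻¹ := by
  have lam'_fix : (C.nu (C.lam' l))⁻¹ • l = l := by
    rw [inv_smul_eq_iff, C.lam'_peiffer, mul_inv_cancel_right]
  have lift_left : C.h m (n * C.lam' l * n⁻¹) =
      (C.mu m * C.nu n) • l * (C.nu n • l)⁻¹ := by
    rw [← C.lam'_conj, C.h_lam', mul_smul]
  have lift_right : C.h (C.lam l)⁻¹ (C.lam' l * n * (C.lam' l)⁻¹) = C.nu n • l * l⁻¹ := by
    rw [← map_inv, C.h_lam, smul_inv', inv_inv, map_mul, map_mul, map_inv, mul_smul, mul_smul,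
      lam'_fix, C.lam'_peiffer]
    group
  change C.h m (n * C.lam' l * n⁻¹) * C.h (C.lam l)⁻¹ (C.lam' l * n * (C.lam' l)⁻¹) = _
  rw [lift_left, lift_right]
  group
end

section
/- Let (L,M,N,P,λ,λ',μ,ν,h) be a crossed square. Define functions d₀¹, d₁¹ : N × M × P → P by d₀¹(n,m,p) = ν(n)·μ(m)·p and d₁¹(n,m,p) = p; s₀⁰ : P → N × M × P by s₀⁰(p) = (1,1,p); d₀², d₁², d₂² : L × N × M × N × M × P → N × M × P by d₀²(l,n,m₁,n₁,m₂,p) = (n₁, λ(l)·(^{ν(n)}m₁), ν(n)·μ(m₂)·p), d₁²(l,n,m₁,n₁,m₂,p) = (n₁·λ'(l)·n, m₁·m₂, p), d₂²(l,n,m₁,n₁,m₂,p) = (n, m₂, p); and s₀¹, s₁¹ : N × M × P → L × N × M × N × M × P by s₀¹(n,m,p) = (1,1,m,n,1,p) and s₁¹(n,m,p) = (1,n,1,1,m,p). Then the truncated simplicial identities hold: d₀²∘s₀¹ = id, d₁²∘s₀¹ = id, d₁²∘s₁¹ = id, d₂²∘s₁¹ = id, d₂²∘s₀¹ = s₀⁰∘d₁¹,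 d₀¹∘d₁² = d₀¹∘d₀², and d₁¹∘d₁² = d₁¹∘d₂². -/
/-- The truncated simplicial identities for the explicit face
and degeneracy maps built from a crossed square: `d₀²∘s₀¹ = id`, `d₁²∘s₀¹ = id`,
`d₁²∘s₁¹ = id`, `d₂²∘s₁¹ = id`, `d₂²∘s₀¹ = s₀⁰∘d₁¹`, `d₀¹∘d₁² = d₀¹∘d₀²`, and
`d₁¹∘d₁² = d₁¹∘d₂²`. -/
theorem truncated_simplicial_identities {L M N P : Type*}
    [Group L] [Group M] [Group N] [Group P]
    [MulDistribMulAction P L] [MulDistribMulAction P M] [MulDistribMulAction P N]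
    (C : CrossedSquare L M N P)
    (d01 d11 : N × M × P → P) (s00 : P → N × M × P)
    (d02 d12 d22 : L × N × M × N × M × P → N × M × P)
    (s01 s11 : N × M × P → L × N × M × N × M × P)
    (hd01 : ∀ (n : N) (m : M) (p : P), d01 (n, m, p) = C.nu n * C.mu m * p)
    (hd11 : ∀ (n : N) (m : M) (p : P), d11 (n, m, p) = p)
    (hs00 : ∀ p : P, s00 p = (1, 1, p))
    (hd02 : ∀ (l : L) (n : N) (m₁ : M) (n₁ : N) (m₂ : M) (p : P),
      d02 (l, n, m₁, n₁, m₂, p) = (n₁, C.lam l * (C.nu n • m₁), C.nu n * C.mu m₂ * p))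
    (hd12 : ∀ (l : L) (n : N) (m₁ : M) (n₁ : N) (m₂ : M) (p : P),
      d12 (l, n, m₁, n₁, m₂, p) = (n₁ * C.lam' l * n, m₁ * m₂, p))
    (hd22 : ∀ (l : L) (n : N) (m₁ : M) (n₁ : N) (m₂ : M) (p : P),
      d22 (l, n, m₁, n₁, m₂, p) = (n, m₂, p))
    (hs01 : ∀ (n : N) (m : M) (p : P), s01 (n, m, p) = (1, 1, m, n, 1, p))
    (hs11 : ∀ (n : N) (m : M) (p : P), s11 (n, m, p) = (1, n, 1, 1, m, p)) :
    d02 ∘ s01 = id ∧ d12 ∘ s01 = id ∧ d12 ∘ s11 = id ∧ d22 ∘ s11 = id ∧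
    d22 ∘ s01 = s00 ∘ d11 ∧ d01 ∘ d12 = d01 ∘ d02 ∧ d11 ∘ d12 = d11 ∘ d22 := by
  refine ⟨?_, ?_, ?_, ?_, ?_, ?_, ?_⟩
  · ext1 ⟨n, m, p⟩
    simp [hs01, hd02]
  · ext1 ⟨n, m, p⟩
    simp [hs01, hd12]
  · ext1 ⟨n, m, p⟩
    simp [hs11, hd12]
  · ext1 ⟨n, m, p⟩
    simp [hs11, hd22]
  · ext1 ⟨n, m, p⟩
    simp [hs01, hd22, hs00, hd11]
  · ext1 ⟨l, n, m₁, n₁, m₂, p⟩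
    simp [hd12, hd02, hd01, C.comm, C.mu_conj, mul_assoc]
  · ext1 ⟨l, n, m₁, n₁, m₂, p⟩
    simp [hd12, hd22, hd11]
end

section
/- Let μ : M → P and ν : N → P be crossed modules over the same group P. Form N ⋊ (M ⋊ P), where M ⋊ P acts on N by ^{(m,p)}n := ^{μ(m)·p}n. Then d₀ : N ⋊ (M ⋊ P) → P, d₀(n,m,p) = ν(n)·μ(m)·p, is a group homomorphism, and the map f₁ : ker d₀ → M ⋊ N (where N acts on M via ν) defined by f₁(n,m,p) = (m⁻¹, n⁻¹) is a group isomorphism. -/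
/-- For crossed modules `μ : M → P`, `ν : N → P`, the map
`d₀(n,m,p) = ν(n)·μ(m)·p` on `N ⋊ (M ⋊ P)` (with `^{(m,p)}n = ^{μ(m)·p}n`) is a
group homomorphism, and `f₁ : ker d₀ → M ⋊ N`, `f₁(n,m,p) = (m⁻¹, n⁻¹)`
(`N` acting on `M` via `ν`) is a group isomorphism. -/
theorem ker_d0_iso {M N P : Type*} [Group M] [Group N] [Group P]
    [MulDistribMulAction P M] [MulDistribMulAction P N]
    (μ : M →* P) (ν : N →* P)
    (hμconj : ∀ (p : P) (m : M), μ (p • m) = p * μ m * p⁻¹)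
    (hμpeiffer : ∀ m m' : M, μ m • m' = m * m' * m⁻¹)
    (hνconj : ∀ (p : P) (n : N), ν (p • n) = p * ν n * p⁻¹)
    (hνpeiffer : ∀ n n' : N, ν n • n' = n * n' * n⁻¹)
    (φ : (M ⋊[MulDistribMulAction.toMulAut P M] P) →* MulAut N)
    (hφ : ∀ (g : M ⋊[MulDistribMulAction.toMulAut P M] P) (n : N),
      φ g n = (μ g.left * g.right) • n) :
    ∃ D : (N ⋊[φ] (M ⋊[MulDistribMulAction.toMulAut P M] P)) →* P,
      (∀ g : N ⋊[φ] (M ⋊[MulDistribMulAction.toMulAut P M] P),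
        D g = ν g.left * μ g.right.left * g.right.right) ∧
      ∃ e : D.ker ≃* (M ⋊[(MulDistribMulAction.toMulAut P M).comp ν] N),
        ∀ x : D.ker, e x = ⟨(x.val.right.left)⁻¹, (x.val.left)⁻¹⟩ := by
  let D : (N ⋊[φ] (M ⋊[MulDistribMulAction.toMulAut P M] P)) →* P :=
    MonoidHom.mk' (fun g => ν g.left * μ g.right.left * g.right.right) (by
      intro g h
      simp only [SemidirectProduct.mul_left, SemidirectProduct.mul_right, map_mul, hφ,
        MulDistribMulAction.toMulAut_apply, MulDistribMulAction.toMulEquiv_apply, hμconj, hνconj]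
      group)
  have hD : ∀ g, D g = ν g.left * μ g.right.left * g.right.right := fun _ => rfl
  have hker : ∀ x : D.ker, ν x.val.left * μ x.val.right.left * x.val.right.right = 1 :=
    fun x => x.2
  have hright : ∀ x : D.ker,
      x.val.right.right = (μ x.val.right.left)⁻¹ * (ν x.val.left)⁻¹ := fun x => by
    rw [← mul_inv_rev]
    exact eq_inv_of_mul_eq_one_right (hker x)
  refine ⟨D, hD, ?_⟩
  refine ⟨{ toFun := fun x => ⟨(x.val.right.left)⁻¹, (x.val.left)⁻¹⟩
            invFun := fun y => ⟨⟨y.right⁻¹, ⟨y.left⁻¹, μ y.left * ν y.right⟩⟩, ?_⟩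
            left_inv := ?_
            right_inv := ?_
            map_mul' := ?_ }, fun _ => rfl⟩
  · rw [MonoidHom.mem_ker, hD]
    simp only [map_inv]
    group
  · intro x
    apply Subtype.ext
    refine SemidirectProduct.ext (inv_inv _) (SemidirectProduct.ext (inv_inv _) ?_)
    simp only [map_inv, hright]
  · intro y
    exact SemidirectProduct.ext (inv_inv _) (inv_inv _)
  · intro x y
    apply SemidirectProduct.ext
    · simp only [Subgroup.coe_mul, SemidirectProduct.mul_left, SemidirectProduct.mul_right,
        MulDistribMulAction.toMulAut_apply, MulDistribMulAction.toMulEquiv_apply,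
        MonoidHom.comp_apply, hright, mul_smul, ← map_inv μ, ← map_inv ν, hμpeiffer, smul_inv']
      group
    · simp only [Subgroup.coe_mul, SemidirectProduct.mul_left, SemidirectProduct.mul_right, hφ,
        hright, mul_inv_cancel_left, ← map_inv ν, hνpeiffer]
      group
end
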